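/- Let Ω ⊆ ℝⁿ be open and F : Ω → ℝᵐ be semismooth on Ω with respect to Ψ. Then for every x ∈ Ω, the convex hull of the B-Jacobian satisfies ∅ ≠ conv ∇̄F(x) ⊆ (cocl Ψ)(x). -/

import Mathlib

open Filter Topology Set

/-- `F` is semismooth at `xb` (relative to the open set `Ω`) with respect to the set-valued
mapping `Ψ` into linear maps: `dom Ψ` is a neighborhood of `xb`, `Ψ` is locally bounded at
`xb`, and `sup{‖F x - F xb - A (x - xb)‖ : A ∈ Ψ x} = o(‖x - xb‖)` as `x → xb` in `Ω`. -/
def SemismoothAt {n m : ℕ} (Ω : Set (EuclideanSpace ℝ (Fin n)))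
    (F : EuclideanSpace ℝ (Fin n) → EuclideanSpace ℝ (Fin m))
    (Ψ : EuclideanSpace ℝ (Fin n) → Set (EuclideanSpace ℝ (Fin n) →L[ℝ] EuclideanSpace ℝ (Fin m)))
    (xb : EuclideanSpace ℝ (Fin n)) : Prop :=
  {x | (Ψ x).Nonempty} ∈ 𝓝 xb ∧
  (∃ U ∈ 𝓝 xb, ∃ M : ℝ, ∀ x ∈ U, ∀ A ∈ Ψ x, ‖A‖ ≤ M) ∧
  ∀ ε > 0, ∃ δ > 0, ∀ x ∈ Ω, ‖x - xb‖ < δ → ∀ A ∈ Ψ x,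
    ‖F x - F xb - A (x - xb)‖ ≤ ε * ‖x - xb‖

noncomputable def clMap {n m : ℕ}
    (Ψ : EuclideanSpace ℝ (Fin n) → Set (EuclideanSpace ℝ (Fin n) →L[ℝ] EuclideanSpace ℝ (Fin m)))
    (x : EuclideanSpace ℝ (Fin n)) : Set (EuclideanSpace ℝ (Fin n) →L[ℝ] EuclideanSpace ℝ (Fin m)) :=
  {A | (x, A) ∈ closure {p : EuclideanSpace ℝ (Fin n) × (EuclideanSpace ℝ (Fin n) →L[ℝ] EuclideanSpace ℝ (Fin m)) | p.2 ∈ Ψ p.1}}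

noncomputable def coclMap {n m : ℕ}
    (Ψ : EuclideanSpace ℝ (Fin n) → Set (EuclideanSpace ℝ (Fin n) →L[ℝ] EuclideanSpace ℝ (Fin m)))
    (x : EuclideanSpace ℝ (Fin n)) : Set (EuclideanSpace ℝ (Fin n) →L[ℝ] EuclideanSpace ℝ (Fin m)) :=
  convexHull ℝ (clMap Ψ x)

/-- The B-Jacobian of `F` at `x` (limits of Jacobians at nearby differentiability points). -/
noncomputable def BJac {n m : ℕ} (Ω : Set (EuclideanSpace ℝ (Fin n)))
    (F : EuclideanSpace ℝ (Fin n) → EuclideanSpace ℝ (Fin m))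
    (x : EuclideanSpace ℝ (Fin n)) : Set (EuclideanSpace ℝ (Fin n) →L[ℝ] EuclideanSpace ℝ (Fin m)) :=
  {A | ∃ xk : ℕ → EuclideanSpace ℝ (Fin n),
      (∀ k, xk k ∈ Ω ∧ DifferentiableAt ℝ F (xk k)) ∧
      Filter.Tendsto xk Filter.atTop (nhds x) ∧
      Filter.Tendsto (fun k => fderiv ℝ F (xk k)) Filter.atTop (nhds A)}

/-! At almost every `y ∈ Ω` semismoothness forces `Ψ y = {∇F(y)}`: split `Ω` into countably many
sets on which the semismoothness estimate is uniform; at a density point `y` of such a set the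
estimate can be read from nearby base points towards `y`, in every direction.

Moreover `F` is locally Lipschitz. At a differentiability point `y`, integrate the gradients of
the blow-ups `w ↦ r⁻¹ • (F (y + r • w) - F y)` against a smooth bump; moving the derivative onto
the bump shows that these averages of gradients near `y` converge to `∇F(y)`. Hence `∇F(y)` lies
in every closed convex set that contains almost every nearby gradient. By local boundedness, the
sets `Ψ(y)` with `y` near `x` lie in any given neighbourhood of the compact set `(cl Ψ)(x)`, whose
convex hull is closed; so limits of gradients at `x` lie in `(cocl Ψ)(x)`. -/

open MeasureTheory Metric
open scoped NNReal Pointwise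

section Lipschitz

variable {E F : Type*} [NormedAddCommGroup E] [NormedSpace ℝ E] [NormedAddCommGroup F]

theorem norm_sub_le_of_eventually_norm_sub_le {g : ℝ → F} {a b C : ℝ} (hab : a ≤ b)
    (h : ∀ t ∈ Icc a b, ∀ᶠ u in 𝓝[Icc a b] t, ‖g u - g t‖ ≤ C * |u - t|) :
    ‖g b - g a‖ ≤ C * (b - a) := by
  have hcont : ContinuousOn (fun t => ‖g t - g a‖) (Icc a b) := by
    refine ContinuousOn.norm (ContinuousOn.sub (fun t ht => ?_) continuousOn_const)
    refine tendsto_iff_norm_sub_tendsto_zero.2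
      (squeeze_zero' (.of_forall fun _ => norm_nonneg _) (h t ht) ?_)
    have : Continuous fun u : ℝ => C * |u - t| := by fun_prop
    simpa using this.continuousWithinAt (s := Icc a b) (x := t) |>.tendsto
  have hslope : ∀ t ∈ Ico a b, ∀ r, C < r →
      ∃ᶠ u in 𝓝[>] t, slope (fun t => ‖g t - g a‖) t u < r := fun t ht r hr => by
    have hle : 𝓝[>] t ≤ 𝓝[Icc a b] t :=
      nhdsWithin_le_iff.2 (mem_of_superset (Ioc_mem_nhdsGT ht.2)
        fun u hu => ⟨ht.1.trans hu.1.le, hu.2⟩)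
    refine Eventually.frequently ?_
    filter_upwards [hle (h t (Ico_subset_Icc_self ht)), self_mem_nhdsWithin] with u hu htu
    rw [abs_of_pos (sub_pos.2 htu)] at hu
    have htri := norm_sub_norm_le (g u - g a) (g t - g a)
    rw [sub_sub_sub_cancel_right] at htri
    rw [slope_def_field]
    exact ((div_le_iff₀ (sub_pos.2 htu)).2 (htri.trans hu)).trans_lt hr
  exact image_le_of_liminf_slope_right_le_deriv_boundary hcont
    (B := fun t => C * (t - a)) (B' := fun _ => C) (by simp) (by fun_prop)
    (fun t _ => by simpa using (((hasDerivAt_id t).sub_const a).const_mul C).hasDerivWithinAt)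
    hslope (right_mem_Icc.2 hab)

theorem lipschitzOnWith_of_eventually_norm_sub_le {f : E → F} {s : Set E} {C : ℝ≥0}
    (hs : Convex ℝ s) (h : ∀ z ∈ s, ∀ᶠ y in 𝓝[s] z, ‖f y - f z‖ ≤ C * ‖y - z‖) :
    LipschitzOnWith C f s := by
  refine LipschitzOnWith.of_dist_le_mul fun b hb a ha => ?_
  let γ : ℝ → E := fun t => a + t • (b - a)
  have hγs : MapsTo γ (Icc 0 1) s := fun t ht => hs.add_smul_sub_mem ha hb ht
  have hγ : Continuous γ := by fun_prop
  have hbound : ‖f (γ 1) - f (γ 0)‖ ≤ C * ‖b - a‖ * (1 - 0) := by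
    refine norm_sub_le_of_eventually_norm_sub_le (g := f ∘ γ) zero_le_one fun t ht => ?_
    filter_upwards [(hγ.continuousWithinAt.tendsto_nhdsWithin hγs).eventually (h _ (hγs ht))]
      with u hu
    calc ‖f (γ u) - f (γ t)‖ ≤ C * ‖γ u - γ t‖ := hu
      _ = C * ‖(u - t) • (b - a)‖ := by simp only [γ, add_sub_add_left_eq_sub, sub_smul]
      _ = C * ‖b - a‖ * |u - t| := by rw [norm_smul, Real.norm_eq_abs]; ring
  simpa [γ, dist_eq_norm] using hbound

theorem lipschitzOnWith_of_eventually_norm_sub_sub_apply_le [NormedSpace ℝ F] {f : E → F}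
    {Ψ : E → Set (E →L[ℝ] F)} {s : Set E} {M ε : ℝ≥0} (hs : Convex ℝ s)
    (hne : ∀ y ∈ s, (Ψ y).Nonempty) (hM : ∀ y ∈ s, ∀ A ∈ Ψ y, ‖A‖ ≤ M)
    (h : ∀ z ∈ s, ∀ᶠ y in 𝓝[s] z, ∀ A ∈ Ψ y, ‖f y - f z - A (y - z)‖ ≤ ε * ‖y - z‖) :
    LipschitzOnWith (ε + M) f s := by
  refine lipschitzOnWith_of_eventually_norm_sub_le hs fun z hz => ?_
  filter_upwards [h z hz, self_mem_nhdsWithin] with y hy hys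
  obtain ⟨A, hA⟩ := hne y hys
  calc ‖f y - f z‖ ≤ ‖f y - f z - A (y - z)‖ + ‖A (y - z)‖ := norm_le_norm_sub_add _ _
    _ ≤ ε * ‖y - z‖ + M * ‖y - z‖ :=
      add_le_add (hy A hA) (A.le_of_opNorm_le (hM y hys A hA) _)
    _ = (ε + M : ℝ≥0) * ‖y - z‖ := by push_cast; ring

end Lipschitz

section Density

theorem norm_apply_le_of_mem_tangentConeAt {𝕜 E F : Type*} [NontriviallyNormedField 𝕜]
    [NormedAddCommGroup E] [NormedSpace 𝕜 E] [NormedAddCommGroup F] [NormedSpace 𝕜 F]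
    {f : E → F} {L : E →L[𝕜] F} {s : Set E} {y u : E} {ε : ℝ} (hf : HasFDerivWithinAt f L s y)
    (hε : ∀ᶠ z in 𝓝[s] y, ‖f z - f y‖ ≤ ε * ‖z - y‖) (hu : u ∈ tangentConeAt 𝕜 s y) :
    ‖L u‖ ≤ ε * ‖u‖ := by
  obtain ⟨α, l, _, c, d, hd, hds, hcd⟩ := exists_fun_of_mem_tangentConeAt hu
  have hyd : Tendsto (fun n => y + d n) l (𝓝[s] y) :=
    tendsto_nhdsWithin_iff.2 ⟨by simpa using hd.const_add y, hds⟩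
  refine le_of_tendsto_of_tendsto (hf.lim hd hds hcd).norm (hcd.norm.const_mul ε) ?_
  filter_upwards [hyd.eventually hε] with n hn
  rw [add_sub_cancel_left] at hn
  calc ‖c n • (f (y + d n) - f y)‖ ≤ ‖c n‖ * (ε * ‖d n‖) := by rw [norm_smul]; gcongr
    _ = ε * ‖c n • d n‖ := by rw [norm_smul, mul_left_comm]

variable {E F : Type*} [NormedAddCommGroup E] [NormedSpace ℝ E] [FiniteDimensional ℝ E]
  [MeasurableSpace E] [BorelSpace E] [NormedAddCommGroup F] [NormedSpace ℝ F]
  {μ : Measure E} [μ.IsAddHaarMeasure]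

theorem tangentConeAt_eq_univ_of_density_one {s : Set E} {y : E}
    (h : Tendsto (fun r => μ (s ∩ closedBall y r) / μ (closedBall y r)) (𝓝[>] 0) (𝓝 1)) :
    tangentConeAt ℝ s y = univ := by
  refine eq_univ_of_forall fun u => ?_
  simp only [tangentConeAt_eq_biInter_closure, mem_iInter₂]
  intro U hU
  refine (mem_closure_iff_nhds_basis nhds_basis_ball).2 fun η hη => ?_
  have hmeet : ∀ᶠ r : ℝ in 𝓝[>] 0, (s ∩ ({y} + r • ball u η)).Nonempty :=
    Measure.eventually_nonempty_inter_smul_of_density_one μ s y h _ measurableSet_ball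
      (measure_ball_pos μ u hη).ne'
  have hsmall : ∀ᶠ r : ℝ in 𝓝[>] 0, {0} + r • ball u η ⊆ U :=
    nhdsWithin_le_nhds (eventually_singleton_add_smul_subset isBounded_ball hU)
  obtain ⟨r, ⟨⟨_, hzs, _, rfl, _, ⟨v, hv, rfl⟩, rfl⟩, hrU⟩, hr : 0 < r⟩ :=
    ((hmeet.and hsmall).and self_mem_nhdsWithin).exists
  refine ⟨v, ⟨r⁻¹, mem_univ _, r • v, ⟨hrU ?_, hzs⟩, inv_smul_smul₀ hr.ne' v⟩, hv⟩
  exact ⟨0, rfl, r • v, smul_mem_smul_set hv, zero_add _⟩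

variable (μ)

theorem ae_tangentConeAt_eq_univ (s : Set E) : ∀ᵐ y ∂μ, y ∈ s → tangentConeAt ℝ s y = univ :=
  (ae_imp_of_ae_restrict (Besicovitch.ae_tendsto_measure_inter_div μ s)).mono
    fun _ hy hys => tangentConeAt_eq_univ_of_density_one (hy hys)

theorem ae_eq_fderiv_of_eventually_norm_sub_sub_apply_le {Ω : Set E} {f : E → F}
    {Ψ : E → Set (E →L[ℝ] F)}
    (h : ∀ z ∈ Ω, ∀ ε > 0, ∀ᶠ y in 𝓝[Ω] z, ∀ A ∈ Ψ y,
      ‖f y - f z - A (y - z)‖ ≤ ε * ‖y - z‖) :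
    ∀ᵐ y ∂μ, y ∈ Ω → DifferentiableAt ℝ f y → ∀ A ∈ Ψ y, A = fderiv ℝ f y := by
  let ε : ℕ → ℝ := fun k => 1 / ((k : ℝ) + 1)
  have hε : ∀ k, 0 < ε k := fun k => Nat.one_div_pos_of_nat
  let S : ℕ → ℕ → Set E := fun i k =>
    {z | ∀ y ∈ ball z (ε k) ∩ Ω, ∀ A ∈ Ψ y, ‖f y - f z - A (y - z)‖ ≤ ε i * ‖y - z‖}
  have hS : ∀ z ∈ Ω, ∀ i, ∃ k, z ∈ S i k := fun z hz i => by
    obtain ⟨δ, hδ, hδS⟩ := mem_nhdsWithin_iff.1 (h z hz (ε i) (hε i))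
    obtain ⟨k, hk⟩ := exists_nat_one_div_lt hδ
    exact ⟨k, fun y hy => hδS ⟨ball_subset_ball hk.le hy.1, hy.2⟩⟩
  filter_upwards [ae_all_iff.2 fun i => ae_all_iff.2 fun k => ae_tangentConeAt_eq_univ μ (S i k)]
    with y hy hyΩ hfy A hA
  have hbound : ∀ u i, ‖(fderiv ℝ f y - A) u‖ ≤ ε i * ‖u‖ := fun u i => by
    obtain ⟨k, hk⟩ := hS y hyΩ i
    refine norm_apply_le_of_mem_tangentConeAt (f := fun z => f z - A z) (s := S i k) (y := y)
      (hfy.hasFDerivAt.sub A.hasFDerivAt).hasFDerivWithinAt ?_ (hy i k hk ▸ mem_univ u)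
    filter_upwards [self_mem_nhdsWithin, nhdsWithin_le_nhds (ball_mem_nhds y (hε k))]
      with z hzS hzy
    have hyz := hzS y ⟨mem_ball_comm.1 hzy, hyΩ⟩ A hA
    rwa [norm_sub_rev y z, ← norm_neg, show -(f y - f z - A (y - z)) = f z - A z - (f y - A y) by
      rw [map_sub]; abel] at hyz
  refine (sub_eq_zero.1 (ContinuousLinearMap.ext fun u => norm_le_zero_iff.1 ?_)).symm
  simpa using ge_of_tendsto' (tendsto_one_div_add_atTop_nhds_zero_nat.mul_const ‖u‖) (hbound u)

end Density

section Blowup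

variable {E F : Type*} [NormedAddCommGroup E] [NormedSpace ℝ E] [NormedAddCommGroup F]
  [NormedSpace ℝ F] {f : E → F}

/-- The blow-up of `f` at the point `y` at scale `r`: the increment of `f` from `y`, with source
and target rescaled by `r⁻¹`, so that as `r → 0` it converges to the derivative of `f` at `y`. -/
noncomputable def blowup (f : E → F) (y : E) (r : ℝ) (w : E) : F :=
  r⁻¹ • (f (y + r • w) - f y)

theorem lipschitzWith_blowup {C : ℝ≥0} (hf : LipschitzWith C f) (y : E) {r : ℝ} (hr : r ≠ 0) :
    LipschitzWith C (blowup f y r) := by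
  refine LipschitzWith.of_dist_le_mul fun a b => ?_
  have hab : ‖f (y + r • a) - f (y + r • b)‖ ≤ ‖r‖ * (C * ‖a - b‖) := by
    simpa [← smul_sub, norm_smul, mul_left_comm] using hf.norm_sub_le (y + r • a) (y + r • b)
  rw [dist_eq_norm, dist_eq_norm, blowup, blowup, ← smul_sub, sub_sub_sub_cancel_right, norm_smul,
    norm_inv]
  exact (inv_mul_le_iff₀ (norm_pos_iff.2 hr)).2 hab

theorem fderiv_blowup (f : E → F) (y : E) {r : ℝ} (hr : r ≠ 0) (w : E) :
    fderiv ℝ (blowup f y r) w = fderiv ℝ f (y + r • w) := by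
  rw [show blowup f y r = r⁻¹ • fun w => f (y + r • w) - f y from rfl, fderiv_const_smul_field,
    Pi.smul_apply, fderiv_sub_const, fderiv_comp_smul (f := fun x => f (y + x)),
    fderiv_comp_add_left, inv_smul_smul₀ hr]

theorem tendsto_blowup {L : E →L[ℝ] F} {y : E} (hf : HasFDerivAt f L y) (w : E) :
    Tendsto (fun r => blowup f y r w) (𝓝[>] 0) (𝓝 (L w)) :=
  (hf.hasLineDerivAt w).tendsto_slope_zero_right

end Blowup

theorem integral_smul_mem_of_convex {α V : Type*} [MeasurableSpace α] {μ : Measure α}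
    [NormedAddCommGroup V] [NormedSpace ℝ V] [CompleteSpace V] {K : Set V} {w : α → ℝ} {f : α → V}
    (hK : Convex ℝ K) (hKc : IsClosed K) (hw : Measurable w) (hw0 : ∀ a, 0 ≤ w a)
    (hw1 : ∫ a, w a ∂μ = 1) (hf : ∀ᵐ a ∂μ, w a ≠ 0 → f a ∈ K)
    (hwf : Integrable (fun a => w a • f a) μ) : ∫ a, w a • f a ∂μ ∈ K := by
  let ν := μ.withDensity fun a => ENNReal.ofReal (w a)
  have hmeas : Measurable fun a => ENNReal.ofReal (w a) := hw.ennreal_ofReal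
  have hfin : ∀ᵐ a ∂μ, ENNReal.ofReal (w a) < ⊤ := ae_of_all _ fun a => ENNReal.ofReal_lt_top
  have hwi : Integrable w μ := not_not.1 fun hni => by simp [integral_undef hni] at hw1
  have : IsProbabilityMeasure ν := ⟨by
    rw [withDensity_apply _ .univ, setLIntegral_univ,
      ← ofReal_integral_eq_lintegral_ofReal hwi (ae_of_all _ hw0), hw1, ENNReal.ofReal_one]⟩
  have hsmul : ∀ a, (ENNReal.ofReal (w a)).toReal • f a = w a • f a := fun a => by
    rw [ENNReal.toReal_ofReal (hw0 a)]
  have hfν : ∀ᵐ a ∂ν, f a ∈ K :=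
    (ae_withDensity_iff hmeas).2 (hf.mono fun a ha h0 => ha fun hwa => h0 (by simp [hwa]))
  have hfi : Integrable f ν :=
    (integrable_withDensity_iff_integrable_smul' hmeas hfin).2 (by simpa only [hsmul] using hwf)
  rw [← integral_congr_ae (ae_of_all μ hsmul),
    ← integral_withDensity_eq_integral_toReal_smul hmeas hfin]
  exact hK.integral_mem hKc hfν hfi

section Average

variable {E F : Type*} [NormedAddCommGroup E] [NormedSpace ℝ E] [FiniteDimensional ℝ E]
  [MeasurableSpace E] [BorelSpace E] [NormedAddCommGroup F] [NormedSpace ℝ F]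
  [FiniteDimensional ℝ F] {μ : Measure E} {C : ℝ≥0} {f : E → F} {φ : E → ℝ}

theorem integrable_smul_fderiv_of_lipschitzWith (hf : LipschitzWith C f) (hφ : Integrable φ μ) :
    Integrable (fun x => φ x • fderiv ℝ f x) μ :=
  hφ.smul_bdd _ (measurable_fderiv ℝ f).aestronglyMeasurable
    (ae_of_all _ fun _ => norm_fderiv_le_of_lipschitz ℝ hf)

variable [μ.IsAddHaarMeasure]

theorem integral_smul_fderiv_eq_neg_integral_smulRight (hf : LipschitzWith C f)
    (hφ : ContDiff ℝ 1 φ) (hφc : HasCompactSupport φ) :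
    ∫ x, φ x • fderiv ℝ f x ∂μ = -∫ x, (fderiv ℝ φ x).smulRight (f x) ∂μ := by
  obtain ⟨D, hD⟩ := hφ.lipschitzWith_of_hasCompactSupport hφc one_ne_zero
  have hleft : Integrable (fun x => φ x • fderiv ℝ f x) μ :=
    integrable_smul_fderiv_of_lipschitzWith hf (hφ.continuous.integrable_of_hasCompactSupport hφc)
  have hright : Integrable (fun x => (fderiv ℝ φ x).smulRight (f x)) μ :=
    Continuous.integrable_of_hasCompactSupport
      (by have := hφ.continuous_fderiv one_ne_zero; have := hf.continuous; fun_prop)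
      ((hφc.fderiv ℝ).mono fun x hx hx0 => hx (by simp [hx0]))
  ext v
  refine (SeparatingDual.eq_iff_forall_dual_eq (R := ℝ)).2 fun l => ?_
  let T : (E →L[ℝ] F) →L[ℝ] ℝ := l ∘L ContinuousLinearMap.apply ℝ F v
  have hlf : ∀ᵐ x ∂μ, lineDeriv ℝ (l ∘ f) x v * φ x = T (φ x • fderiv ℝ f x) := by
    filter_upwards [hf.ae_differentiableAt] with x hx
    rw [((l.hasFDerivAt.comp x hx.hasFDerivAt).hasLineDerivAt v).lineDeriv]
    simp [T, mul_comm]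
  have hlφ : ∀ x, lineDeriv ℝ φ x (-v) * l (f x) = -T ((fderiv ℝ φ x).smulRight (f x)) :=
    fun x => by
    rw [((hφ.differentiable one_ne_zero).differentiableAt (x := x)).lineDeriv_eq_fderiv]
    simp [T]
  calc T (∫ x, φ x • fderiv ℝ f x ∂μ)
    _ = ∫ x, lineDeriv ℝ (l ∘ f) x v * φ x ∂μ := by
      rw [← T.integral_comp_comm hleft, integral_congr_ae hlf]
    _ = ∫ x, lineDeriv ℝ φ x (-v) * l (f x) ∂μ :=
      (l.lipschitz.comp hf).integral_lineDeriv_mul_eq hD hφc v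
    _ = T (-∫ x, (fderiv ℝ φ x).smulRight (f x) ∂μ) := by
      rw [map_neg, ← T.integral_comp_comm hright, ← integral_neg]
      exact integral_congr_ae (ae_of_all _ hlφ)

theorem tendsto_integral_smul_fderiv_of_lipschitzWith {ι : Type*} {l : Filter ι}
    [l.IsCountablyGenerated] {g : ι → E → F} (hg : ∀ᶠ i in l, LipschitzWith C (g i))
    (hf : LipschitzWith C f) (hgf : ∀ x, Tendsto (fun i => g i x) l (𝓝 (f x)))
    (hφ : ContDiff ℝ 1 φ) (hφc : HasCompactSupport φ) :
    Tendsto (fun i => ∫ x, φ x • fderiv ℝ (g i) x ∂μ) l (𝓝 (∫ x, φ x • fderiv ℝ f x ∂μ)) := by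
  have : Continuous (fderiv ℝ φ) := hφ.continuous_fderiv one_ne_zero
  have hg0 : ∀ᶠ i in l, ‖g i 0‖ ≤ ‖f 0‖ + 1 :=
    (hgf 0).norm.eventually_le_const (lt_add_one _)
  have hlim : Tendsto (fun i => ∫ x, (fderiv ℝ φ x).smulRight (g i x) ∂μ) l
      (𝓝 (∫ x, (fderiv ℝ φ x).smulRight (f x) ∂μ)) := by
    refine tendsto_integral_filter_of_dominated_convergence
      (fun x => ‖fderiv ℝ φ x‖ * (C * ‖x‖ + (‖f 0‖ + 1))) ?_ ?_ ?_ (ae_of_all _ fun x => ?_)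
    · filter_upwards [hg] with i hi
      have := hi.continuous
      exact (by fun_prop : Continuous _).aestronglyMeasurable
    · filter_upwards [hg, hg0] with i hi hi0
      refine ae_of_all _ fun x => ?_
      rw [ContinuousLinearMap.norm_smulRight_apply]
      gcongr
      calc ‖g i x‖ ≤ ‖g i x - g i 0‖ + ‖g i 0‖ := norm_le_norm_sub_add _ _
        _ ≤ C * ‖x‖ + (‖f 0‖ + 1) := by
          gcongr
          simpa using hi.norm_sub_le x 0
    · exact Continuous.integrable_of_hasCompactSupport (by fun_prop) (hφc.fderiv ℝ).norm.mul_right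
    · exact ((ContinuousLinearMap.smulRightL ℝ E F (fderiv ℝ φ x)).continuous.tendsto _).comp
        (hgf x)
  rw [integral_smul_fderiv_eq_neg_integral_smulRight hf hφ hφc]
  refine hlim.neg.congr' ?_
  filter_upwards [hg] with i hi
  exact (integral_smul_fderiv_eq_neg_integral_smulRight hi hφ hφc).symm

variable {K : Set (E →L[ℝ] F)} {U : Set E} {y : E}

theorem fderiv_mem_of_ae_fderiv_mem (hf : LipschitzWith C f) (hy : DifferentiableAt ℝ f y)
    (hK : Convex ℝ K) (hKc : IsClosed K) (hU : U ∈ 𝓝 y)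
    (hUK : ∀ᵐ z ∂μ, z ∈ U → fderiv ℝ f z ∈ K) : fderiv ℝ f y ∈ K := by
  let b : ContDiffBump (0 : E) := default
  let ψ := b.normed μ
  have hψ1 : ∫ w, ψ w ∂μ = 1 := b.integral_normed
  have hlip : ∀ᶠ r : ℝ in 𝓝[>] 0, LipschitzWith C (blowup f y r) :=
    eventually_mem_nhdsWithin.mono fun r hr => lipschitzWith_blowup hf y (ne_of_gt hr)
  have hlim : Tendsto (fun r => ∫ w, ψ w • fderiv ℝ (blowup f y r) w ∂μ) (𝓝[>] 0)
      (𝓝 (fderiv ℝ f y)) := by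
    have hL : LipschitzWith C (fderiv ℝ f y) :=
      (fderiv ℝ f y).lipschitz.weaken (norm_fderiv_le_of_lipschitz ℝ hf)
    have := tendsto_integral_smul_fderiv_of_lipschitzWith (μ := μ) (φ := ψ) hlip hL
      (tendsto_blowup hy.hasFDerivAt) (b.contDiff_normed (n := 1)) b.hasCompactSupport_normed
    simpa only [ContinuousLinearMap.fderiv, integral_smul_const, hψ1, one_smul] using this
  have hsmall : ∀ᶠ r : ℝ in 𝓝[>] 0, {y} + r • ball 0 b.rOut ⊆ U :=
    nhdsWithin_le_nhds (eventually_singleton_add_smul_subset isBounded_ball hU)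
  refine hKc.mem_of_tendsto hlim ?_
  filter_upwards [hsmall, hlip, self_mem_nhdsWithin] with r hrU hr hr0
  have hnull : Measure.QuasiMeasurePreserving (fun w => y + r • w) μ μ :=
    (measurePreserving_add_left μ y).quasiMeasurePreserving.comp
      (Measure.quasiMeasurePreserving_smul μ hr0.ne')
  refine integral_smul_mem_of_convex hK hKc b.continuous_normed.measurable b.nonneg_normed hψ1
    ?_ (integrable_smul_fderiv_of_lipschitzWith hr b.integrable_normed)
  filter_upwards [hnull.ae hUK] with w hw hψw
  have hwb : w ∈ ball 0 b.rOut := b.support_normed_eq (μ := μ) ▸ hψw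
  rw [fderiv_blowup f y hr0.ne']
  exact hw (hrU (add_mem_add rfl (smul_mem_smul_set hwb)))

theorem fderiv_mem_of_ae_fderiv_mem_of_lipschitzOnWith (hf : LipschitzOnWith C f U)
    (hy : DifferentiableAt ℝ f y) (hK : Convex ℝ K) (hKc : IsClosed K) (hU : U ∈ 𝓝 y)
    (hUK : ∀ᵐ z ∂μ, z ∈ U → fderiv ℝ f z ∈ K) : fderiv ℝ f y ∈ K := by
  obtain ⟨g, hg, hfg⟩ := hf.extend_finite_dimension
  have hfg' : ∀ z ∈ interior U, f =ᶠ[𝓝 z] g := fun z hz =>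
    hfg.eventuallyEq_of_mem (mem_interior_iff_mem_nhds.1 hz)
  have hyU : y ∈ interior U := mem_interior_iff_mem_nhds.2 hU
  rw [(hfg' y hyU).fderiv_eq]
  refine fderiv_mem_of_ae_fderiv_mem (μ := μ) hg ((hfg' y hyU).differentiableAt_iff.1 hy) hK hKc
    (isOpen_interior.mem_nhds hyU) ?_
  filter_upwards [hUK] with z hz hzU
  rw [← (hfg' z hzU).fderiv_eq]
  exact hz (interior_subset hzU)

variable (μ) in
theorem ae_differentiableAt_of_lipschitzOnWith_isOpen (hf : LipschitzOnWith C f U)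
    (hU : IsOpen U) : ∀ᵐ z ∂μ, z ∈ U → DifferentiableAt ℝ f z :=
  (hf.ae_differentiableWithinAt_of_mem (μ := μ)).mono
    fun _ hz hzU => (hz hzU).differentiableAt (hU.mem_nhds hzU)

end Average

theorem isCompact_convexHull {V : Type*} [NormedAddCommGroup V] [NormedSpace ℝ V]
    [FiniteDimensional ℝ V] {s : Set V} (hs : IsCompact s) : IsCompact (convexHull ℝ s) := by
  have caratheodory : convexHull ℝ s = ⋃ k ∈ Finset.range (Module.finrank ℝ V + 2),
      (fun p : (Fin k → ℝ) × (Fin k → V) => ∑ i, p.1 i • p.2 i) ''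
        (stdSimplex ℝ (Fin k) ×ˢ Set.pi univ fun _ => s) := by
    refine Subset.antisymm (fun x hx => ?_) (iUnion₂_subset fun k _ => ?_)
    · obtain ⟨ι, _, z, w, hz, hai, hw, hw1, hx⟩ := eq_pos_convex_span_of_mem_convexHull hx
      have hcard : Fintype.card ι < Module.finrank ℝ V + 2 := by
        have := hai.card_le_finrank_succ
        have := Submodule.finrank_le (vectorSpan ℝ (range z))
        lia
      let e := Fintype.equivFin ι
      refine mem_iUnion₂.2 ⟨Fintype.card ι, Finset.mem_range.2 hcard, (w ∘ e.symm, z ∘ e.symm),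
        ⟨⟨fun i => (hw _).le, ?_⟩, fun i _ => hz ⟨_, rfl⟩⟩, ?_⟩
      · exact (Equiv.sum_comp e.symm w).trans hw1
      · exact (Equiv.sum_comp e.symm fun i => w i • z i).trans hx
    · rintro _ ⟨⟨w, z⟩, ⟨hw, hz⟩, rfl⟩
      exact (convex_convexHull ℝ s).sum_mem (fun i _ => hw.1 i) hw.2
        fun i _ => subset_convexHull ℝ s (hz i trivial)
  rw [caratheodory]
  exact Finset.isCompact_biUnion _ fun k _ => IsCompact.image
    ((isCompact_stdSimplex ℝ (Fin k)).prod (isCompact_univ_pi fun _ => hs)) (by fun_prop)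

section ClosureGraph

variable {X Y : Type*} [TopologicalSpace X] [TopologicalSpace Y] {Ψ : X → Set Y} {x : X}
  {K V : Set Y}

theorem mem_of_mk_mem_closure_graph {y : Y} (hK : IsClosed K) (hΨ : ∀ᶠ z in 𝓝 x, Ψ z ⊆ K)
    (hy : (x, y) ∈ closure {p : X × Y | p.2 ∈ Ψ p.1}) : y ∈ K := by
  have hfreq : ∃ᶠ p in 𝓝 (x, y), p.2 ∈ K :=
    ((mem_closure_iff_frequently.1 hy).and_eventually
      (continuous_fst.continuousAt.eventually hΨ)).mono fun p hp => hp.2 hp.1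
  exact hK.mem_of_frequently_of_tendsto hfreq continuous_snd.continuousAt

theorem eventually_subset_of_closure_graph_subset (hK : IsCompact K)
    (hΨ : ∀ᶠ z in 𝓝 x, Ψ z ⊆ K) (hV : IsOpen V)
    (hxV : {y | (x, y) ∈ closure {p : X × Y | p.2 ∈ Ψ p.1}} ⊆ V) : ∀ᶠ z in 𝓝 x, Ψ z ⊆ V := by
  have hoff : ∀ᶠ z in 𝓝 x, ∀ y ∈ K \ V, y ∉ Ψ z := by
    refine (hK.diff hV).eventually_forall_of_forall_eventually fun y hy => ?_
    have hmem := isClosed_closure.isOpen_compl.mem_nhds fun hcl => hy.2 (hxV hcl)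
    filter_upwards [hmem] with p hp hpΨ using hp (subset_closure hpΨ)
  filter_upwards [hΨ, hoff] with z hzK hz y hy
  exact by_contra fun hyV => hz y ⟨hzK hy, hyV⟩ hy

end ClosureGraph

section Semismooth

variable {n m : ℕ} {Ω : Set (EuclideanSpace ℝ (Fin n))}
  {F : EuclideanSpace ℝ (Fin n) → EuclideanSpace ℝ (Fin m)}
  {Ψ : EuclideanSpace ℝ (Fin n) → Set (EuclideanSpace ℝ (Fin n) →L[ℝ] EuclideanSpace ℝ (Fin m))}
  {x : EuclideanSpace ℝ (Fin n)}

theorem SemismoothAt.exists_eventually_subset_closedBall (h : SemismoothAt Ω F Ψ x) :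
    ∃ M, ∀ᶠ z in 𝓝 x, Ψ z ⊆ closedBall 0 M := by
  obtain ⟨-, ⟨U, hU, M, hM⟩, -⟩ := h
  exact ⟨M, mem_of_superset hU fun z hz A hA => mem_closedBall_zero_iff.2 (hM z hz A hA)⟩

theorem SemismoothAt.eventually_norm_sub_sub_apply_le (h : SemismoothAt Ω F Ψ x) {ε : ℝ}
    (hε : 0 < ε) : ∀ᶠ y in 𝓝[Ω] x, ∀ A ∈ Ψ y, ‖F y - F x - A (y - x)‖ ≤ ε * ‖y - x‖ := by
  obtain ⟨δ, hδ, hδΨ⟩ := h.2.2 ε hε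
  exact mem_nhdsWithin_iff.2 ⟨δ, hδ, fun y hy => hδΨ y hy.2 (mem_ball_iff_norm.1 hy.1)⟩

theorem SemismoothAt.isCompact_clMap (h : SemismoothAt Ω F Ψ x) : IsCompact (clMap Ψ x) := by
  obtain ⟨M, hM⟩ := h.exists_eventually_subset_closedBall
  exact (isCompact_closedBall 0 M).of_isClosed_subset
    (isClosed_closure.preimage (Continuous.prodMk_right x))
    fun A => mem_of_mk_mem_closure_graph isClosed_closedBall hM

theorem exists_isOpen_lipschitzOnWith_of_semismoothAt (hΩ : IsOpen Ω)
    (h : ∀ x ∈ Ω, SemismoothAt Ω F Ψ x) (hx : x ∈ Ω) :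
    ∃ U, IsOpen U ∧ x ∈ U ∧ ∃ C, LipschitzOnWith C F U := by
  obtain ⟨M, hM⟩ := (h x hx).exists_eventually_subset_closedBall
  obtain ⟨ρ, hρ, hball⟩ := Metric.eventually_nhds_iff_ball.1
    ((hM.and (h x hx).1).and (hΩ.mem_nhds hx))
  refine ⟨ball x ρ, isOpen_ball, mem_ball_self hρ, 1 + M.toNNReal,
    lipschitzOnWith_of_eventually_norm_sub_sub_apply_le (Ψ := Ψ) (convex_ball x ρ)
      (fun y hy => (hball y hy).1.2) (fun y hy A hA => ?_) fun z hz => ?_⟩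
  · exact (mem_closedBall_zero_iff.1 ((hball y hy).1.1 hA)).trans (Real.le_coe_toNNReal M)
  · exact nhdsWithin_mono z (fun y hy => (hball y hy).2)
      ((h z (hball z hz).2).eventually_norm_sub_sub_apply_le one_pos)

theorem ae_fderiv_mem_of_semismoothAt (h : ∀ x ∈ Ω, SemismoothAt Ω F Ψ x) :
    ∀ᵐ y, y ∈ Ω → DifferentiableAt ℝ F y → fderiv ℝ F y ∈ Ψ y := by
  filter_upwards [ae_eq_fderiv_of_eventually_norm_sub_sub_apply_le volume
    fun z hz _ => (h z hz).eventually_norm_sub_sub_apply_le] with y hy hyΩ hFy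
  have hne : ∀ᶠ z in 𝓝 y, (Ψ z).Nonempty := (h y hyΩ).1
  obtain ⟨A, hA⟩ := hne.self_of_nhds
  exact hy hyΩ hFy A hA ▸ hA

theorem BJac_nonempty_of_lipschitzOnWith {U : Set (EuclideanSpace ℝ (Fin n))} {C : ℝ≥0}
    (hΩ : Ω ∈ 𝓝 x) (hF : LipschitzOnWith C F U) (hU : IsOpen U) (hxU : x ∈ U) :
    (BJac Ω F x).Nonempty := by
  have hfreq : ∃ᶠ z in 𝓝 x, z ∈ U → DifferentiableAt ℝ F z := mem_closure_iff_frequently.1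
    (Measure.dense_of_ae (ae_differentiableAt_of_lipschitzOnWith_isOpen volume hF hU) x)
  obtain ⟨z, hzx, hz⟩ := exists_seq_forall_of_frequently
    (hfreq.and_eventually (inter_mem hΩ (hU.mem_nhds hxU)))
  have hbound : ∀ k, fderiv ℝ F (z k) ∈ closedBall 0 (C : ℝ) := fun k =>
    mem_closedBall_zero_iff.2 (norm_fderiv_le_of_lipschitzOn ℝ (hU.mem_nhds (hz k).2.2) hF)
  obtain ⟨A, -, φ, hφ, hA⟩ := (isCompact_closedBall _ _).tendsto_subseq hbound
  exact ⟨A, z ∘ φ, fun k => ⟨(hz (φ k)).2.1, (hz (φ k)).1 (hz (φ k)).2.2⟩,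
    hzx.comp hφ.tendsto_atTop, hA⟩

theorem BJac_subset_of_ae_fderiv_mem {U : Set (EuclideanSpace ℝ (Fin n))} {C : ℝ≥0}
    {K : Set (EuclideanSpace ℝ (Fin n) →L[ℝ] EuclideanSpace ℝ (Fin m))}
    (hF : LipschitzOnWith C F U) (hU : U ∈ 𝓝 x) (hK : Convex ℝ K) (hKc : IsClosed K)
    (hUK : ∀ᵐ z, z ∈ U → fderiv ℝ F z ∈ K) : BJac Ω F x ⊆ K := by
  rintro A ⟨z, hz, hzx, hzA⟩
  refine hKc.mem_of_tendsto hzA ?_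
  filter_upwards [hzx.eventually (eventually_mem_nhds_iff.2 hU)] with k hk
  exact fderiv_mem_of_ae_fderiv_mem_of_lipschitzOnWith hF (hz k).2 hK hKc hk hUK

theorem BJac_subset_coclMap_of_semismoothAt (hΩ : IsOpen Ω)
    (h : ∀ x ∈ Ω, SemismoothAt Ω F Ψ x) (hx : x ∈ Ω) : BJac Ω F x ⊆ coclMap Ψ x := by
  obtain ⟨U, hU, hxU, C, hF⟩ := exists_isOpen_lipschitzOnWith_of_semismoothAt hΩ h hx
  obtain ⟨M, hM⟩ := (h x hx).exists_eventually_subset_closedBall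
  have hclosed : IsClosed (coclMap Ψ x) := (isCompact_convexHull (h x hx).isCompact_clMap).isClosed
  rw [← hclosed.closure_eq, closure_eq_iInter_cthickening]
  refine subset_iInter₂ fun ε hε => ?_
  have hΨ : ∀ᶠ z in 𝓝 x, Ψ z ⊆ thickening ε (coclMap Ψ x) :=
    eventually_subset_of_closure_graph_subset (isCompact_closedBall 0 M) hM isOpen_thickening
      ((subset_convexHull ℝ (clMap Ψ x)).trans (self_subset_thickening hε _))
  refine BJac_subset_of_ae_fderiv_mem (hF.mono inter_subset_left)
    (inter_mem (hU.mem_nhds hxU) (hΨ.and (hΩ.mem_nhds hx)))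
    ((convex_convexHull ℝ _).cthickening ε) isClosed_cthickening ?_
  filter_upwards [ae_fderiv_mem_of_semismoothAt h,
    ae_differentiableAt_of_lipschitzOnWith_isOpen volume hF hU] with z hz hFz ⟨hzU, hzΨ, hzΩ⟩
  exact thickening_subset_cthickening _ _ (hzΨ (hz hzΩ (hFz hzU)))

end Semismooth

/-- Proposition 3.9(ii) (Gfrerer–Outrata): if `F` is semismooth on the open set `Ω` w.r.t. `Ψ`,
then for every `x ∈ Ω`, `∅ ≠ conv ∇̄F(x) ⊆ (cocl Ψ)(x)`. -/
theorem convBJac_subset_cocl {n m : ℕ}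
    (Ω : Set (EuclideanSpace ℝ (Fin n))) (hΩ : IsOpen Ω)
    (F : EuclideanSpace ℝ (Fin n) → EuclideanSpace ℝ (Fin m))
    (Ψ : EuclideanSpace ℝ (Fin n) → Set (EuclideanSpace ℝ (Fin n) →L[ℝ] EuclideanSpace ℝ (Fin m)))
    (h : ∀ x ∈ Ω, SemismoothAt Ω F Ψ x) :
    ∀ x ∈ Ω, (convexHull ℝ (BJac Ω F x)).Nonempty ∧
      convexHull ℝ (BJac Ω F x) ⊆ coclMap Ψ x := by
  intro x hx
  obtain ⟨U, hU, hxU, C, hF⟩ := exists_isOpen_lipschitzOnWith_of_semismoothAt hΩ h hx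
  exact ⟨(BJac_nonempty_of_lipschitzOnWith (hΩ.mem_nhds hx) hF hU hxU).convexHull,
    convexHull_min (BJac_subset_coclMap_of_semismoothAt hΩ h hx) (convex_convexHull ℝ _)⟩
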